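/- arXiv:1407.2675 — 5 statements merged into one kernel-verified Lean document; each statement's English description precedes it below -/
import Mathlib

section
/- Let Q be a finitely generated projective left Λ-module and let C and D be Λ-submodules of Q. Then the quotient modules Q/C and Q/D are isomorphic as Λ-modules if and only if there exists a Λ-linear automorphism f of Q with f(C) = D. (Consequently, the isomorphism classes of quotients of Q are in one-to-one correspondence with the orbits of submodules of Q under the natural action of Aut_Λ(Q).) -/
/-!
Let `p, q : Q → N` be epimorphisms out of a projective module. Lifting each through the other gives
endomorphisms `f, x` of `Q` with `q f = p` and `p x = q`, so `f x + (1 - f x) = 1` where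
`1 - f x` lands in `ker q`. If `End Q` has stable range one, then `f + (1 - f x) y` is invertible
for some `y`, and it still satisfies `q (f + (1 - f x) y) = p`. With `p` and `q` the projections
onto `Q ⧸ C ≃ Q ⧸ D` this is the required automorphism.

Over a semilocal ring, reduction modulo the radical is a surjective local homomorphism from `End Q`
to the endomorphism ring of a semisimple module of finite length; the latter is unit-regular by
Artin–Wedderburn, and unit-regular rings have stable range one.
-/

section StableRange

variable {R S : Type*} [Ring R] [Ring S]

/-- A ring `R` has (right) stable range one: whenever `a R + b R = R`, some `a + b y` is a unit.
Replacing `b` by a right multiple of itself, it is enough to require this when `a x + b = 1`. -/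
def HasStableRangeOne (R : Type*) [Ring R] : Prop :=
  ∀ a b x : R, a * x + b = 1 → ∃ y, IsUnit (a + b * y)

/-- A ring is unit-regular if every element `a` has a generalized inverse `u`, in the sense that
`a u a = a`, which is a unit. -/
def IsUnitRegular (R : Type*) [Ring R] : Prop :=
  ∀ a : R, ∃ u : Rˣ, a * u * a = a

theorem HasStableRangeOne.of_surjective (hS : HasStableRangeOne S) (φ : R →+* S) [IsLocalHom φ]
    (hφ : Function.Surjective φ) : HasStableRangeOne R := by
  intro a b x h
  obtain ⟨y', hy'⟩ := hS (φ a) (φ b) (φ x) (by rw [← map_mul, ← map_add, h, map_one])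
  obtain ⟨y, rfl⟩ := hφ y'
  exact ⟨y, .of_map φ _ (by rwa [map_add, map_mul])⟩

theorem IsUnitRegular.of_ringEquiv (hS : IsUnitRegular S) (φ : R ≃+* S) : IsUnitRegular R := by
  intro a
  obtain ⟨u, hu⟩ := hS (φ a)
  exact ⟨Units.map φ.symm u, φ.injective (by simpa using hu)⟩

theorem IsUnitRegular.pi {ι : Type*} {A : ι → Type*} [∀ i, Ring (A i)]
    (hA : ∀ i, IsUnitRegular (A i)) : IsUnitRegular (∀ i, A i) := by
  intro a
  choose u hu using fun i ↦ hA i (a i)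
  exact ⟨MulEquiv.piUnits.symm u, funext hu⟩

theorem isUnit_one_sub_mul_of_mul_eq_zero {a b : R} (h : a * b = 0) : IsUnit (1 - b * a) := by
  refine IsNilpotent.isUnit_one_sub ⟨2, ?_⟩
  calc (b * a) ^ 2 = b * (a * b) * a := by noncomm_ring
    _ = 0 := by rw [h, mul_zero, zero_mul]

theorem IsUnitRegular.hasStableRangeOne (hR : IsUnitRegular R) : HasStableRangeOne R := by
  intro a b x h
  obtain ⟨u, hu⟩ := hR a
  let e := a * u
  have he : IsIdempotentElem e := by rw [IsIdempotentElem, ← mul_assoc, hu]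
  have ha : a = e * ↑u⁻¹ := (Units.mul_inv_cancel_right a u).symm
  have hb : b = 1 - e * (↑u⁻¹ * x) := by rw [← mul_assoc, ← ha, ← h, add_sub_cancel_left]
  have hunit : IsUnit (1 - e * (↑u⁻¹ * x) * (1 - e)) :=
    isUnit_one_sub_mul_of_mul_eq_zero (by rw [← mul_assoc, he.one_sub_mul_self, zero_mul])
  refine ⟨(1 - e) * ↑u⁻¹, ?_⟩
  have key : a + b * ((1 - e) * ↑u⁻¹) = (1 - e * (↑u⁻¹ * x) * (1 - e)) * ↑u⁻¹ :=
    calc a + b * ((1 - e) * ↑u⁻¹)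
      _ = e * ↑u⁻¹ + (1 - e * (↑u⁻¹ * x)) * ((1 - e) * ↑u⁻¹) := by rw [← ha, ← hb]
      _ = (1 - e * (↑u⁻¹ * x) * (1 - e)) * ↑u⁻¹ := by noncomm_ring
  rw [key]
  exact hunit.mul u⁻¹.isUnit

end StableRange

section Semisimple

theorem isUnitRegular_end_of_finiteDimensional (D V : Type*) [DivisionRing D] [AddCommGroup V]
    [Module D V] [FiniteDimensional D V] : IsUnitRegular (Module.End D V) := by
  intro f
  obtain ⟨W, hW⟩ := (LinearMap.ker f).exists_isCompl
  let e := f.kerComplementEquivRange hW.symm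
  obtain ⟨g, hg⟩ := Submodule.exists_linearEquiv_restrict_eq e
  refine ⟨LinearMap.GeneralLinearGroup.ofLinearEquiv g.symm, LinearMap.ext fun v ↦ ?_⟩
  obtain ⟨w, hw⟩ := e.surjective ⟨f v, f.mem_range_self v⟩
  have hfw : f w = f v := congrArg Subtype.val hw
  have hgw : g w = f v := by rw [← hg, hw]
  change f (g.symm (f v)) = f v
  rw [← hgw, g.symm_apply_apply, hfw, hgw]

theorem isUnitRegular_matrix (D : Type*) [DivisionRing D] (n : Type*) [Fintype n]
    [DecidableEq n] : IsUnitRegular (Matrix n n D) :=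
  have : Module.Finite Dᵐᵒᵖ D :=
    .of_surjective (LinearMap.toSpanSingleton Dᵐᵒᵖ D 1) fun d ↦ ⟨.op d, one_mul d⟩
  (isUnitRegular_end_of_finiteDimensional Dᵐᵒᵖ (n → D)).of_ringEquiv <|
    (RingEquiv.moduleEndSelfOp D).mapMatrix.trans (endVecRingEquivMatrixEnd n Dᵐᵒᵖ D).symm

theorem isUnitRegular_end_of_isSemisimpleModule (R M : Type*) [Ring R] [AddCommGroup M]
    [Module R M] [IsSemisimpleModule R M] [Module.Finite R M] :
    IsUnitRegular (Module.End R M) := by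
  obtain ⟨_, D, d, _, _, ⟨φ⟩⟩ :=
    IsSemisimpleModule.exists_end_ringEquiv_pi_matrix_divisionRing R M
  exact (IsUnitRegular.pi fun i ↦ isUnitRegular_matrix (D i) (Fin (d i))).of_ringEquiv φ

end Semisimple

section Radical

variable (R M : Type*) [Ring R] [AddCommGroup M] [Module R M]

/-- Reduction of endomorphisms modulo the radical of a module. -/
def endQuotientJacobson :
    Module.End R M →+* Module.End R (M ⧸ Module.jacobson R M) where
  toFun f := Submodule.mapQ _ _ f (Module.le_comap_jacobson f)
  map_one' := Submodule.mapQ_id _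
  map_mul' f g := Submodule.mapQ_comp _ _ _ g f (Module.le_comap_jacobson g)
    (Module.le_comap_jacobson f)
  map_zero' := Submodule.mapQ_zero ..
  map_add' f g := by ext; rfl

variable {R M}

theorem endQuotientJacobson_comp_mkQ (f : Module.End R M) :
    endQuotientJacobson R M f ∘ₗ (Module.jacobson R M).mkQ = (Module.jacobson R M).mkQ ∘ₗ f :=
  Submodule.mapQ_mkQ _ _ f (h := Module.le_comap_jacobson f)

theorem endQuotientJacobson_surjective [Module.Projective R M] :
    Function.Surjective (endQuotientJacobson R M) := by
  intro f
  obtain ⟨g, hg⟩ := Module.projective_lifting_property (Module.jacobson R M).mkQ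
    (f ∘ₗ (Module.jacobson R M).mkQ) (Submodule.mkQ_surjective _)
  exact ⟨g, Submodule.linearMap_qext _ ((endQuotientJacobson_comp_mkQ g).trans hg)⟩

theorem eq_top_of_sup_jacobson_eq_top [IsCoatomic (Submodule R M)] {N : Submodule R M}
    (h : N ⊔ Module.jacobson R M = ⊤) : N = ⊤ := by
  by_contra hN
  obtain ⟨m, hm, hNm⟩ := (eq_top_or_exists_le_coatom N).resolve_left hN
  exact hm.1 (top_le_iff.mp (h ▸ sup_le hNm (sInf_le hm)))

theorem surjective_of_endQuotientJacobson_surjective [IsCoatomic (Submodule R M)]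
    {f : Module.End R M} (hf : Function.Surjective (endQuotientJacobson R M f)) :
    Function.Surjective f := by
  rw [← LinearMap.range_eq_top]
  have hrange :
      LinearMap.range (endQuotientJacobson R M f ∘ₗ (Module.jacobson R M).mkQ) = ⊤ :=
    LinearMap.range_eq_top.mpr (hf.comp (Submodule.mkQ_surjective _))
  apply eq_top_of_sup_jacobson_eq_top
  calc LinearMap.range f ⊔ Module.jacobson R M
    _ = ((LinearMap.range f).map (Module.jacobson R M).mkQ).comap (Module.jacobson R M).mkQ := by
      rw [Submodule.comap_map_mkQ, sup_comm]
    _ = ⊤ := by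
      rw [← LinearMap.range_comp, ← endQuotientJacobson_comp_mkQ, hrange, Submodule.comap_top]

instance isLocalHom_endQuotientJacobson [IsCoatomic (Submodule R M)] [Module.Projective R M] :
    IsLocalHom (endQuotientJacobson R M) where
  map_nonunit f hf := by
    have surjective_of_isUnit {g : Module.End R M} (hg : IsUnit (endQuotientJacobson R M g)) :
        Function.Surjective g :=
      surjective_of_endQuotientJacobson_surjective ((Module.End.isUnit_iff _).mp hg).surjective
    obtain ⟨g, hg⟩ := Module.projective_lifting_property f .id (surjective_of_isUnit hf)
    have hfg : Function.LeftInverse f g := LinearMap.congr_fun hg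
    have hg_unit : IsUnit (endQuotientJacobson R M g) := by
      rw [← hf.mul_left_iff, ← map_mul, show f * g = 1 from hg, map_one]
      exact isUnit_one
    have hgf : Function.RightInverse f g :=
      hfg.rightInverse_of_surjective (surjective_of_isUnit hg_unit)
    exact (Module.End.isUnit_iff f).mpr ⟨hgf.injective, hfg.surjective⟩

theorem isSemisimpleModule_quotient_jacobson [IsSemisimpleRing (R ⧸ Ring.jacobson R)] :
    IsSemisimpleModule R (M ⧸ Module.jacobson R M) := by
  have h : Module.IsTorsionBySet R (M ⧸ Module.jacobson R M) (Ring.jacobson R) :=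
    (Module.isTorsionBySet_quotient_iff _ _).mpr fun m r hr ↦
      Ring.jacobson_smul_top_le R M (Submodule.smul_mem_smul hr trivial)
  let := h.module
  exact h.isSemisimpleModule_iff.mp inferInstance

theorem hasStableRangeOne_end_of_semilocal [IsSemisimpleRing (R ⧸ Ring.jacobson R)]
    [Module.Finite R M] [Module.Projective R M] : HasStableRangeOne (Module.End R M) :=
  have := isSemisimpleModule_quotient_jacobson (R := R) (M := M)
  (isUnitRegular_end_of_isSemisimpleModule R (M ⧸ Module.jacobson R M)).hasStableRangeOne
    |>.of_surjective (endQuotientJacobson R M) endQuotientJacobson_surjective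

end Radical

theorem exists_linearEquiv_comp_eq_of_surjective {R Q N : Type*} [Ring R]
    [AddCommGroup Q] [Module R Q] [Module.Projective R Q] [AddCommGroup N] [Module R N]
    (hQ : HasStableRangeOne (Module.End R Q)) {p q : Q →ₗ[R] N}
    (hp : Function.Surjective p) (hq : Function.Surjective q) :
    ∃ g : Q ≃ₗ[R] Q, q ∘ₗ g = p := by
  obtain ⟨f, hf⟩ := Module.projective_lifting_property q p hq
  obtain ⟨x, hx⟩ := Module.projective_lifting_property p q hp
  obtain ⟨y, hy⟩ := hQ f (1 - f * x) x (add_sub_cancel _ _)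
  have hker : q ∘ₗ (1 - f * x) = 0 := by
    rw [LinearMap.comp_sub, Module.End.mul_eq_comp, ← LinearMap.comp_assoc, hf, hx, sub_eq_zero]
    rfl
  refine ⟨.ofBijective _ ((Module.End.isUnit_iff _).mp hy), ?_⟩
  calc q ∘ₗ (f + (1 - f * x) * y) = q ∘ₗ f + (q ∘ₗ (1 - f * x)) ∘ₗ y := LinearMap.comp_add ..
    _ = p := by rw [hker, LinearMap.zero_comp, add_zero, hf]

theorem quotients_iso_iff_exists_automorphism_map_eq_general
    {Λ : Type*} [Ring Λ] [IsSemisimpleRing (Λ ⧸ Ring.jacobson Λ)]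
    {Q : Type*} [AddCommGroup Q] [Module Λ Q] [Module.Finite Λ Q] [Module.Projective Λ Q]
    (C D : Submodule Λ Q) :
    Nonempty ((Q ⧸ C) ≃ₗ[Λ] (Q ⧸ D)) ↔
      ∃ f : Q ≃ₗ[Λ] Q, Submodule.map (f : Q →ₗ[Λ] Q) C = D := by
  refine ⟨fun ⟨φ⟩ ↦ ?_, fun ⟨f, hf⟩ ↦ ⟨Submodule.Quotient.equiv C D f hf⟩⟩
  obtain ⟨g, hg⟩ := exists_linearEquiv_comp_eq_of_surjective
    hasStableRangeOne_end_of_semilocal (p := φ.toLinearMap ∘ₗ C.mkQ)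
    (φ.surjective.comp C.mkQ_surjective) D.mkQ_surjective
  have hC : C = D.comap (g : Q →ₗ[Λ] Q) :=
    calc C = LinearMap.ker (φ.toLinearMap ∘ₗ C.mkQ) := by rw [LinearEquiv.ker_comp, C.ker_mkQ]
      _ = D.comap (g : Q →ₗ[Λ] Q) := by rw [← hg, LinearMap.ker_comp, D.ker_mkQ]
  exact ⟨g, by rw [hC, Submodule.map_comap_eq_of_surjective g.surjective]⟩

/-- Let `Λ` be a finite-dimensional algebra over a field `K`, and let `Q` be a
finitely generated projective left `Λ`-module with `Λ`-submodules `C` and `D`.  Then `Q ⧸ C` and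
`Q ⧸ D` are isomorphic as `Λ`-modules if and only if there is a `Λ`-linear automorphism `f` of `Q`
with `f(C) = D`. -/
theorem quotients_iso_iff_exists_automorphism_map_eq
    (K : Type*) [Field K] (Λ : Type*) [Ring Λ] [Algebra K Λ] [FiniteDimensional K Λ]
    (Q : Type*) [AddCommGroup Q] [Module Λ Q]
    [Module.Finite Λ Q] [Module.Projective Λ Q]
    (C D : Submodule Λ Q) :
    Nonempty ((Q ⧸ C) ≃ₗ[Λ] (Q ⧸ D)) ↔
      ∃ f : Q ≃ₗ[Λ] Q, Submodule.map (f : Q →ₗ[Λ] Q) C = D := by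
  have : IsArtinianRing Λ := .of_finite K Λ
  exact quotients_iso_iff_exists_automorphism_map_eq_general C D
end

section
/- Assume in addition that K is algebraically closed, and let Q be a finitely generated projective left Λ-module. Then the canonical surjective group homomorphism Aut_Λ(Q) → Aut_Λ(Q/JQ) splits: there exists a group homomorphism s : Aut_Λ(Q/JQ) → Aut_Λ(Q) such that for every h ∈ Aut_Λ(Q/JQ) the automorphism s(h) induces h on Q/JQ. Consequently Aut_Λ(Q) is the semidirect product of the normal subgroup { id_Q + g : g ∈ Hom_Λ(Q, JQ) } with a subgroup isomorphic to Aut_Λ(Q/JQ). -/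
/-!
By Wedderburn's principal theorem the projection `Λ → Λ/J` has a multiplicative section: over an
algebraically closed field `Λ/J` is a product of matrix algebras, and matrix units lift along a
surjection with nil kernel.

Such a section makes `Q` isomorphic to `Λ ⊗ Q/JQ`, the tensor product being over `Λ/J`, and
`h ↦ id ⊗ h` is the required splitting. The tensor product is avoided as follows. With `ρ` the
composite `Λ → Λ/J → Λ`, the projection `Q → Q/JQ` has a `ρ`-semilinear section `τ`, obtained by
writing `Q` as a summand of a free module and applying `ρ` to coordinates. Every `ρ`-semilinear map
on `Q/JQ` extends uniquely along `τ` to a `Λ`-linear map on `Q`, and `h` is sent to the extension of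
`τ ∘ h`; uniqueness makes this multiplicative.
-/

section NilKernel

variable {A B : Type*} [Ring A] [Ring B]

theorem exists_mul_eq_of_isNilpotent_sub {e a : A} (he : IsIdempotentElem e) (hae : a * e = a)
    (h : IsNilpotent (a - e)) : ∃ b, e * b = b ∧ b * a = e := by
  obtain ⟨w, hw⟩ := h.isUnit_one_add
  have hwe : w * e = a := by
    rw [hw, add_mul, one_mul, sub_mul, hae, he.eq, add_sub_cancel]
  exact ⟨e * ↑w⁻¹, by rw [← mul_assoc, he.eq],
    by rw [← hwe, mul_assoc, Units.inv_mul_cancel_left, he.eq]⟩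

variable {f : A →+* B}

-- A lift `u₀` of `x` is corrected by a left inverse `b` of `u₀ * v` in the corner of `e`.
theorem exists_lift_mul_eq_of_isIdempotentElem (hf : Function.Surjective f)
    (hker : ∀ x ∈ RingHom.ker f, IsNilpotent x) {e c : A} (he : IsIdempotentElem e)
    (hc : IsIdempotentElem c) {x y : B} (hx : f e * x * f c = x) (hy : f c * y * f e = y)
    (hxy : x * y = f e) (hyx : y * x = f c) :
    ∃ u v, f u = x ∧ f v = y ∧ e * u = u ∧ u * c = u ∧ c * v = v ∧ u * v = e ∧ v * u = c := by
  obtain ⟨⟨x₀, hx₀⟩, v₀, hv₀⟩ := And.intro (hf x) (hf y)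
  obtain ⟨u₀, hu₀, eu₀, u₀c⟩ : ∃ u₀, f u₀ = x ∧ e * u₀ = u₀ ∧ u₀ * c = u₀ :=
    ⟨e * x₀ * c, by simp only [map_mul, hx₀, hx], by simp only [← mul_assoc, he.eq],
      by rw [mul_assoc, hc.eq]⟩
  obtain ⟨v, hv, cv, ve⟩ : ∃ v, f v = y ∧ c * v = v ∧ v * e = v :=
    ⟨c * v₀ * e, by simp only [map_mul, hv₀, hy], by simp only [← mul_assoc, hc.eq],
      by rw [mul_assoc, he.eq]⟩
  obtain ⟨b, eb, hb⟩ := exists_mul_eq_of_isNilpotent_sub he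
    (show u₀ * v * e = u₀ * v by rw [mul_assoc, ve])
    (hker _ (by rw [RingHom.mem_ker, map_sub, map_mul, hu₀, hv, hxy, sub_self]))
  have fb : f b * f e = f e := by
    rw [← hxy, ← hu₀, ← hv, ← map_mul, ← map_mul, hb, map_mul, hu₀, hv, hxy]
  have hu : f (b * u₀) = x := by
    rw [← eu₀, map_mul, map_mul, ← mul_assoc, fb, ← map_mul, eu₀, hu₀]
  have uc : b * u₀ * c = b * u₀ := by rw [mul_assoc, u₀c]
  have uv : b * u₀ * v = e := by rw [mul_assoc, hb]
  have vu_idem : IsIdempotentElem (v * (b * u₀)) := by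
    rw [IsIdempotentElem, mul_assoc, ← mul_assoc _ v, uv, ← mul_assoc e, eb]
  have vu_comm : Commute (v * (b * u₀)) c := by
    rw [Commute, SemiconjBy, mul_assoc, uc, ← mul_assoc c, cv]
  refine ⟨b * u₀, v, hu, hv, by rw [← mul_assoc, eb], uc, cv, uv, ?_⟩
  exact eq_of_isNilpotent_sub_of_isIdempotentElem_of_commute vu_idem hc
    (hker _ (by rw [RingHom.mem_ker, map_sub, map_mul, hu, hv, hyx, sub_self])) vu_comm

end NilKernel

/-- `E` is a complete system of matrix units of `A` with blocks indexed by `ι`: `E i a b` plays the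
role of the matrix with entry `1` at `(a, b)` in the block `i`. Points of `Σ i, n i` are compared in
`mul_eq_zero` so that it covers products across two blocks as well as within one. -/
structure IsMatrixUnits {ι : Type*} {n : ι → Type*} {A : Type*} [Semiring A] [Fintype ι]
    [∀ i, Fintype (n i)] (E : ∀ i, n i → n i → A) : Prop where
  mul_eq : ∀ i a b c, E i a b * E i b c = E i a c
  mul_eq_zero : ∀ {i j b c} a d, (⟨i, b⟩ : Σ i, n i) ≠ ⟨j, c⟩ → E i a b * E j c d = 0
  sum_diag : ∑ i, ∑ a, E i a a = 1

namespace IsMatrixUnits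

variable {ι : Type*} {n : ι → Type*} [Fintype ι] [∀ i, Fintype (n i)]

section Semiring

variable {A : Type*} [Semiring A] {E : ∀ i, n i → n i → A}

theorem completeOrthogonalIdempotents (hE : IsMatrixUnits E) :
    CompleteOrthogonalIdempotents fun p : Σ i, n i ↦ E p.1 p.2 p.2 where
  idem p := hE.mul_eq _ _ _ _
  ortho _ _ hpq := hE.mul_eq_zero _ _ hpq
  complete := by rw [Fintype.sum_sigma, hE.sum_diag]

theorem of_completeOrthogonalIdempotents {e : (Σ i, n i) → A}
    (he : CompleteOrthogonalIdempotents e) (o : ∀ i, n i) {u v : ∀ i, n i → A}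
    (hou : ∀ i a, e ⟨i, o i⟩ * u i a = u i a) (hue : ∀ i a, u i a * e ⟨i, a⟩ = u i a)
    (hev : ∀ i a, e ⟨i, a⟩ * v i a = v i a)
    (huv : ∀ i a, u i a * v i a = e ⟨i, o i⟩) (hvu : ∀ i a, v i a * u i a = e ⟨i, a⟩) :
    IsMatrixUnits fun i a b ↦ v i a * u i b where
  mul_eq i a b c := by rw [mul_assoc, ← mul_assoc (u i b), huv, hou]
  mul_eq_zero {i j b c} a d h := by
    have : u i b * v j c = 0 := by
      rw [← hue, ← hev, mul_assoc, ← mul_assoc (e _), he.ortho h, zero_mul, mul_zero]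
    rw [mul_assoc, ← mul_assoc (u i b), this, zero_mul, mul_zero]
  sum_diag := by simp only [hvu, ← he.complete, Fintype.sum_sigma]

end Semiring

theorem exists_lift {A B : Type*} [Ring A] [Ring B] [∀ i, Nonempty (n i)] {f : A →+* B}
    (hf : Function.Surjective f) (hker : ∀ x ∈ RingHom.ker f, IsNilpotent x)
    {E : ∀ i, n i → n i → B} (hE : IsMatrixUnits E) :
    ∃ E' : ∀ i, n i → n i → A, IsMatrixUnits E' ∧ ∀ i a b, f (E' i a b) = E i a b := by
  obtain ⟨e, he, hfe⟩ := hE.completeOrthogonalIdempotents.lift_of_isNilpotent_ker f hker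
    fun _ ↦ hf _
  have f_e (i a) : f (e ⟨i, a⟩) = E i a a := congr_fun hfe ⟨i, a⟩
  let o (i : ι) : n i := Classical.arbitrary (n i)
  have exists_lift_pair (i a) := exists_lift_mul_eq_of_isIdempotentElem hf hker
    (he.idem ⟨i, o i⟩) (he.idem ⟨i, a⟩) (x := E i (o i) a) (y := E i a (o i))
    (by simp only [f_e, hE.mul_eq]) (by simp only [f_e, hE.mul_eq])
    (by simp only [f_e, hE.mul_eq]) (by simp only [f_e, hE.mul_eq])
  choose u v hu hv hou hue hev huv hvu using exists_lift_pair
  exact ⟨_, of_completeOrthogonalIdempotents he o hou hue hev huv hvu,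
    fun i a b ↦ by rw [map_mul, hu, hv, hE.mul_eq]⟩

variable [DecidableEq ι] [∀ i, DecidableEq (n i)] {R : Type*} [CommSemiring R]

theorem piSingle_single :
    IsMatrixUnits fun i a b ↦ (Pi.single i (Matrix.single a b 1) : Π i, Matrix (n i) (n i) R) where
  mul_eq i a b c := by rw [← Pi.single_mul, Matrix.single_mul_single_same, mul_one]
  mul_eq_zero {i j b c} a d h := by
    obtain rfl | hij := eq_or_ne i j
    · have hbc : b ≠ c := by rintro rfl; exact h rfl
      rw [← Pi.single_mul, Matrix.single_mul_single_of_ne (h := hbc), Pi.single_zero]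
    · rw [← Pi.single_mul_left, Pi.single_eq_of_ne hij, mul_zero, Pi.single_zero]
  sum_diag := by
    have sum_block (i : ι) : ∑ a, Pi.single i (Matrix.single a a 1) =
        (Pi.single i 1 : Π i, Matrix (n i) (n i) R) := by
      rw [← Matrix.sum_single_one]
      exact (map_sum (AddMonoidHom.single (fun i ↦ Matrix (n i) (n i) R) i) _ _).symm
    simp only [sum_block]
    exact Finset.univ_sum_single 1

theorem exists_algHom {A : Type*} [Semiring A] [Algebra R A] {E : ∀ i, n i → n i → A}
    (hE : IsMatrixUnits E) :
    ∃ g : (Π i, Matrix (n i) (n i) R) →ₐ[R] A,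
      ∀ i a b, g (Pi.single i (Matrix.single a b 1)) = E i a b := by
  let g : (Π i, Matrix (n i) (n i) R) →ₗ[R] A :=
    LinearMap.lsum R (fun i ↦ Matrix (n i) (n i) R) R
      fun i ↦ Matrix.liftLinear R fun a b ↦ LinearMap.toSpanSingleton R A (E i a b)
  have g_single (i a b) : g (Pi.single i (Matrix.single a b 1)) = E i a b := by
    rw [LinearMap.lsum_piSingle, Matrix.liftLinear_single, LinearMap.toSpanSingleton_apply_one]
  have g_mul_single (i : ι) (a b : n i) (j : ι) (c d : n j) :
      g (Pi.single i (Matrix.single a b 1) * Pi.single j (Matrix.single c d 1)) =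
        E i a b * E j c d := by
    by_cases h : (⟨i, b⟩ : Σ i, n i) = ⟨j, c⟩
    · cases h
      rw [piSingle_single.mul_eq, g_single, hE.mul_eq]
    · rw [piSingle_single.mul_eq_zero a d h, map_zero, hE.mul_eq_zero a d h]
  refine ⟨AlgHom.ofLinearMap g ?_ ?_, g_single⟩
  · simp only [← piSingle_single.sum_diag, map_sum, g_single, hE.sum_diag]
  · rw [LinearMap.map_mul_iff]
    refine LinearMap.pi_ext' fun i ↦ Matrix.ext_linearMap _ fun a b ↦ LinearMap.ext_ring ?_
    refine LinearMap.pi_ext' fun j ↦ Matrix.ext_linearMap _ fun c d ↦ LinearMap.ext_ring ?_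
    simpa [g_single] using g_mul_single i a b j c d

end IsMatrixUnits

theorem exists_algHom_rightInverse_of_piMatrix {ι : Type*} [Finite ι] {n : ι → Type*}
    [∀ i, Fintype (n i)] [∀ i, DecidableEq (n i)] [∀ i, Nonempty (n i)] {A R : Type*} [Ring A]
    [CommRing R] [Algebra R A] {f : A →ₐ[R] Π i, Matrix (n i) (n i) R}
    (hf : Function.Surjective f) (hker : ∀ x ∈ RingHom.ker f, IsNilpotent x) :
    ∃ g : (Π i, Matrix (n i) (n i) R) →ₐ[R] A, f.comp g = AlgHom.id R _ := by
  classical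
  have := Fintype.ofFinite ι
  obtain ⟨E, hE, hfE⟩ := IsMatrixUnits.exists_lift (f := (f : A →+* _)) hf hker
    (IsMatrixUnits.piSingle_single (n := n) (R := R))
  obtain ⟨g, hg⟩ := hE.exists_algHom (R := R)
  refine ⟨g, AlgHom.toLinearMap_injective ?_⟩
  refine LinearMap.pi_ext' fun i ↦ Matrix.ext_linearMap _ fun a b ↦ LinearMap.ext_ring ?_
  simpa [hg] using hfE i a b

theorem exists_algHom_rightInverse_of_isAlgClosed {K A B : Type*} [Field K] [IsAlgClosed K] [Ring A]
    [Algebra K A] [Ring B] [Algebra K B] [IsSemisimpleRing B] [FiniteDimensional K B]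
    {f : A →ₐ[K] B} (hf : Function.Surjective f) (hker : ∀ x ∈ RingHom.ker f, IsNilpotent x) :
    ∃ g : B →ₐ[K] A, f.comp g = AlgHom.id K B := by
  obtain ⟨m, d, _, ⟨e⟩⟩ := IsSemisimpleRing.exists_algEquiv_pi_matrix_of_isAlgClosed K B
  obtain ⟨g, hg⟩ := exists_algHom_rightInverse_of_piMatrix (f := e.toAlgHom.comp f)
    (e.surjective.comp hf) fun x hx ↦ hker x (by simpa using hx)
  refine ⟨g.comp e, AlgHom.ext fun b ↦ e.injective ?_⟩
  exact AlgHom.congr_fun hg (e b)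

theorem exists_algHom_rightInverse_mkₐ_jacobson (K Λ : Type*) [Field K] [IsAlgClosed K] [Ring Λ]
    [Algebra K Λ] [FiniteDimensional K Λ] :
    ∃ σ : Λ ⧸ Ring.jacobson Λ →ₐ[K] Λ,
      (Ideal.Quotient.mkₐ K (Ring.jacobson Λ)).comp σ = AlgHom.id K _ := by
  have : IsArtinianRing Λ := .of_finite K Λ
  obtain ⟨k, hk⟩ := IsSemiprimaryRing.isNilpotent (R := Λ)
  refine exists_algHom_rightInverse_of_isAlgClosed (Ideal.Quotient.mkₐ_surjective K _)
    fun x hx ↦ ⟨k, ?_⟩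
  have pow_mem := Ideal.pow_mem_pow (Ideal.Quotient.eq_zero_iff_mem.1 hx) k
  rwa [hk] at pow_mem

section NilpotentIdeal

variable {R M P : Type*} [Ring R] [AddCommGroup M] [Module R M] [AddCommGroup P] [Module R P]
  {I : Ideal R}

theorem eq_bot_of_le_smul_of_isNilpotent (hI : IsNilpotent I) {N : Submodule R M}
    (hN : N ≤ I • N) : N = ⊥ := by
  obtain ⟨k, hk⟩ := hI
  have le_pow_smul (n : ℕ) : N ≤ I ^ n • N := by
    induction n with
    | zero => rw [Submodule.pow_zero, Submodule.one_smul]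
    | succ n ih =>
      rw [Submodule.pow_succ, Submodule.mul_smul]
      exact ih.trans (smul_mono_right _ hN)
  simpa only [hk, Submodule.zero_eq_bot, Submodule.bot_smul, le_bot_iff] using le_pow_smul k

theorem eq_top_of_smul_top_sup_eq_top_of_isNilpotent (hI : IsNilpotent I) {N : Submodule R M}
    (hN : I • ⊤ ⊔ N = ⊤) : N = ⊤ := by
  have map_smul_top : (I • ⊤ : Submodule R M).map N.mkQ = ⊤ := by
    simpa only [Submodule.map_sup, N.mkQ_map_self, sup_bot_eq, Submodule.map_top, N.range_mkQ] using
      congrArg (Submodule.map N.mkQ) hN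
  rw [Submodule.map_smul'', Submodule.map_top, N.range_mkQ] at map_smul_top
  exact Submodule.Quotient.subsingleton_iff.1 <|
    (Submodule.subsingleton_iff R).1 <| subsingleton_of_bot_eq_top
      (eq_bot_of_le_smul_of_isNilpotent hI map_smul_top.ge).symm

theorem injective_of_ker_le_smul_top [Module.Projective R P] (hI : IsNilpotent I) {p : M →ₗ[R] P}
    (hp : Function.Surjective p) (hker : LinearMap.ker p ≤ I • ⊤) : Function.Injective p := by
  obtain ⟨s, hs⟩ := p.exists_rightInverse_of_surjective (LinearMap.range_eq_top.2 hp)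
  let r : M →ₗ[R] M := LinearMap.id - s ∘ₗ p
  have range_r : LinearMap.range r ≤ LinearMap.ker p := by
    rintro _ ⟨x, rfl⟩
    simpa [r, sub_eq_zero] using (LinearMap.congr_fun hs (p x)).symm
  have ker_le_map : LinearMap.ker p ≤ (LinearMap.ker p).map r := fun x hx ↦
    ⟨x, hx, by simp [r, LinearMap.mem_ker.1 hx]⟩
  refine LinearMap.ker_eq_bot.1 (eq_bot_of_le_smul_of_isNilpotent hI ?_)
  calc LinearMap.ker p ≤ (LinearMap.ker p).map r := ker_le_map
    _ ≤ (I • ⊤ : Submodule R M).map r := Submodule.map_mono hker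
    _ = I • LinearMap.range r := by rw [Submodule.map_smul'', Submodule.map_top]
    _ ≤ I • LinearMap.ker p := smul_mono_right _ range_r

end NilpotentIdeal

section SemilinearSection

variable {R : Type*} [Ring R] {I : Ideal R} {ρ : R →+* R}
variable {M N : Type*} [AddCommGroup M] [Module R M] [AddCommGroup N] [Module R N]

theorem exists_semilinear_section_mkQ_smul_top [Module.Projective R M]
    (hI : I ≤ RingHom.ker ρ) (hρ : ∀ a, a - ρ a ∈ I) :
    ∃ τ : (M ⧸ (I • ⊤ : Submodule R M)) →ₛₗ[ρ] M, ∀ x, Submodule.Quotient.mk (τ x) = x := by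
  obtain ⟨s, hs⟩ := Module.Projective.out (R := R) (P := M)
  let t : M →ₛₗ[ρ] M :=
    (Finsupp.linearCombination R id).comp
      ((Finsupp.mapRange.linearMap ρ.toSemilinearMap).comp s)
  have smul_top_le_ker : I • ⊤ ≤ LinearMap.ker t := Submodule.smul_le.2 fun a ha x _ ↦ by
    rw [LinearMap.mem_ker, map_smulₛₗ, RingHom.mem_ker.1 (hI ha), zero_smul]
  have sub_mem (x : M) : x - t x ∈ (I • ⊤ : Submodule R M) := by
    nth_rw 1 [← hs x]
    simp only [t, LinearMap.comp_apply]
    induction s x using Finsupp.induction_linear with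
    | zero => simp
    | add f g hf hg => simpa only [map_add, add_sub_add_comm] using add_mem hf hg
    | single y a => simpa [← sub_smul] using Submodule.smul_mem_smul (hρ a) Submodule.mem_top
  refine ⟨(I • ⊤ : Submodule R M).liftQ t smul_top_le_ker, fun x ↦ ?_⟩
  obtain ⟨x, rfl⟩ := Submodule.Quotient.mk_surjective _ x
  exact ((Submodule.Quotient.eq _).2 (sub_mem x)).symm

theorem exists_sub_mem_smul_top {X : Type*} [AddCommGroup X] [Module R X]
    (hρ : ∀ a, a - ρ a ∈ I) {ψ : X →ₛₗ[ρ] M} (hψ : Submodule.span R (Set.range ψ) = ⊤) (m : M) :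
    ∃ x, m - ψ x ∈ (I • ⊤ : Submodule R M) := by
  induction hψ ▸ Submodule.mem_top (x := m) using Submodule.span_induction with
  | mem m hm =>
    obtain ⟨x, rfl⟩ := hm
    exact ⟨x, by simp⟩
  | zero => exact ⟨0, by simp⟩
  | add m₁ m₂ _ _ h₁ h₂ =>
    obtain ⟨⟨x₁, h₁⟩, x₂, h₂⟩ := And.intro h₁ h₂
    exact ⟨x₁ + x₂, by simpa [add_sub_add_comm] using add_mem h₁ h₂⟩
  | smul a m _ h =>
    obtain ⟨x, hx⟩ := h
    have split : a • m - ψ (a • x) = a • (m - ψ x) + (a - ρ a) • ψ x := by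
      rw [map_smulₛₗ, smul_sub, sub_smul, sub_add_sub_cancel]
    exact ⟨a • x, split ▸ add_mem (Submodule.smul_mem _ a hx)
      (Submodule.smul_mem_smul (hρ a) Submodule.mem_top)⟩

variable {τ : (M ⧸ (I • ⊤ : Submodule R M)) →ₛₗ[ρ] M}

theorem span_range_section_eq_top (hI : IsNilpotent I)
    (hτ : ∀ x, Submodule.Quotient.mk (τ x) = x) : Submodule.span R (Set.range τ) = ⊤ := by
  refine eq_top_of_smul_top_sup_eq_top_of_isNilpotent hI (eq_top_iff.2 fun m _ ↦ ?_)
  rw [← sub_add_cancel m (τ (Submodule.Quotient.mk m))]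
  exact Submodule.add_mem_sup ((Submodule.Quotient.eq _).1 (hτ _).symm)
    (Submodule.subset_span ⟨_, rfl⟩)

theorem bijective_of_comp_eq_section {G : Type*} [AddCommGroup G] [Module R G]
    [Module.Projective R M] (hI : IsNilpotent I) (hρ : ∀ a, a - ρ a ∈ I)
    (hτ : ∀ x, Submodule.Quotient.mk (τ x) = x) {ψ : (M ⧸ (I • ⊤ : Submodule R M)) →ₛₗ[ρ] G}
    (hψ : Submodule.span R (Set.range ψ) = ⊤) {p : G →ₗ[R] M} (hp : ∀ x, p (ψ x) = τ x) :
    Function.Bijective p := by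
  have surjective : Function.Surjective p := by
    rw [← LinearMap.range_eq_top, eq_top_iff, ← span_range_section_eq_top hI hτ, Submodule.span_le]
    exact Set.range_subset_iff.2 fun x ↦ ⟨ψ x, hp x⟩
  refine ⟨injective_of_ker_le_smul_top hI surjective fun w hw ↦ ?_, surjective⟩
  obtain ⟨x, hx⟩ := exists_sub_mem_smul_top hρ hψ w
  have τ_mem : τ x ∈ (I • ⊤ : Submodule R M) := by
    have := Submodule.smul_top_le_comap_smul_top I p hx
    rwa [Submodule.mem_comap, map_sub, LinearMap.mem_ker.1 hw, hp, zero_sub, neg_mem_iff] at this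
  have x_eq_zero : x = 0 := by rwa [← hτ x, Submodule.Quotient.mk_eq_zero]
  simpa only [x_eq_zero, map_zero, sub_zero] using hx

theorem exists_extension_of_section [Module.Projective R M] (hI : IsNilpotent I)
    (hρ : ∀ a, a - ρ a ∈ I) (hτ : ∀ x, Submodule.Quotient.mk (τ x) = x)
    (φ : (M ⧸ (I • ⊤ : Submodule R M)) →ₛₗ[ρ] N) :
    ∃ g : M →ₗ[R] N, ∀ x, g (τ x) = φ x := by
  -- The submodule `G` generated by the graph of `τ x ↦ φ x` is the graph of `g`.
  let ψ := (LinearMap.inl R M N).comp τ + (LinearMap.inr R M N).comp φ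
  let G := Submodule.span R (Set.range ψ)
  let ψG : (M ⧸ (I • ⊤ : Submodule R M)) →ₛₗ[ρ] G :=
    ψ.codRestrict G fun x ↦ Submodule.subset_span ⟨x, rfl⟩
  have span_ψG : Submodule.span R (Set.range ψG) = ⊤ := by
    rw [← Submodule.span_span_coe_preimage (s := Set.range ψ)]
    congr 1
    ext w
    simp only [ψG, Set.mem_range, Set.mem_preimage, Subtype.ext_iff, LinearMap.codRestrict_apply]
  have fst_ψG (x) : (LinearMap.fst R M N ∘ₗ G.subtype) (ψG x) = τ x := by simp [ψG, ψ]
  let e := LinearEquiv.ofBijective _ (bijective_of_comp_eq_section hI hρ hτ span_ψG fst_ψG)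
  have e_symm (x) : e.symm (τ x) = ψG x := e.symm_apply_eq.2 (fst_ψG x).symm
  exact ⟨LinearMap.snd R M N ∘ₗ G.subtype ∘ₗ e.symm, fun x ↦ by simp [e_symm, ψG, ψ]⟩

theorem exists_monoidHom_end_lift [Module.Projective R M] (hI : IsNilpotent I)
    (hIρ : I ≤ RingHom.ker ρ) (hρ : ∀ a, a - ρ a ∈ I) :
    ∃ g : Module.End R (M ⧸ (I • ⊤ : Submodule R M)) →* Module.End R M, ∀ h x,
      Submodule.Quotient.mk (g h x) = h (Submodule.Quotient.mk x) := by
  obtain ⟨τ, hτ⟩ := exists_semilinear_section_mkQ_smul_top (M := M) hIρ hρ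
  have hom_ext {N : Type _} [AddCommGroup N] [Module R N] {g₁ g₂ : M →ₗ[R] N}
      (h : ∀ x, g₁ (τ x) = g₂ (τ x)) : g₁ = g₂ :=
    LinearMap.ext_on_range (span_range_section_eq_top hI hτ) h
  choose g hg using fun h : Module.End R (M ⧸ (I • ⊤ : Submodule R M)) ↦
    exists_extension_of_section hI hρ hτ (τ.comp h)
  refine ⟨{ toFun := g
            map_one' := hom_ext fun x ↦ by simp [hg]
            map_mul' := fun h₁ h₂ ↦ hom_ext fun x ↦ by simp [hg] }, fun h ↦ ?_⟩
  exact LinearMap.congr_fun (f := (I • ⊤ : Submodule R M).mkQ ∘ₗ g h) (g := h ∘ₗ Submodule.mkQ _)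
    (hom_ext fun x ↦ by simp [hg, hτ])

end SemilinearSection

section AutQuotient

variable {R M : Type*} [Ring R] [AddCommGroup M] [Module R M] (I : Ideal R)

variable (M) in
/-- The canonical homomorphism `Aut(M) → Aut(M/IM)`. -/
def autQuotientSMulTop :
    (M ≃ₗ[R] M) →* ((M ⧸ (I • ⊤ : Submodule R M)) ≃ₗ[R] (M ⧸ (I • ⊤ : Submodule R M))) where
  toFun u := Submodule.Quotient.equiv _ _ u <| by
    rw [Submodule.map_smul'', Submodule.map_top, LinearEquiv.range]
  map_one' := LinearEquiv.ext <| (Submodule.Quotient.mk_surjective _).forall.2 fun _ ↦ rfl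
  map_mul' _ _ := LinearEquiv.ext <| (Submodule.Quotient.mk_surjective _).forall.2 fun _ ↦ rfl

theorem mem_ker_autQuotientSMulTop {u : M ≃ₗ[R] M} :
    u ∈ (autQuotientSMulTop M I).ker ↔
      ∃ g : M →ₗ[R] M, LinearMap.range g ≤ I • ⊤ ∧ (u : M →ₗ[R] M) = LinearMap.id + g := by
  have mem_ker_iff : u ∈ (autQuotientSMulTop M I).ker ↔ ∀ x, u x - x ∈ (I • ⊤ : Submodule R M) := by
    rw [MonoidHom.mem_ker, LinearEquiv.ext_iff, (Submodule.Quotient.mk_surjective _).forall]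
    exact forall_congr' fun x ↦ Submodule.Quotient.eq _
  rw [mem_ker_iff]
  constructor
  · intro h
    refine ⟨(u : M →ₗ[R] M) - LinearMap.id, ?_, (add_sub_cancel _ _).symm⟩
    rintro _ ⟨x, rfl⟩
    exact h x
  · rintro ⟨g, hg, hu⟩ x
    have apply_eq : u x = x + g x := LinearMap.congr_fun hu x
    rw [apply_eq, add_sub_cancel_left]
    exact hg ⟨x, rfl⟩

end AutQuotient

theorem bijective_mul_section_of_leftInverse {G H : Type*} [Group G] [Group H] {π : G →* H}
    {s : H →* G} (hs : Function.LeftInverse π s) {P : G → Prop} (hP : ∀ u, P u ↔ u ∈ π.ker) :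
    Function.Bijective fun p : {u // P u} × H ↦ (p.1 : G) * s p.2 := by
  have proj (p : {u // P u} × H) : π (p.1 * s p.2) = p.2 := by
    rw [map_mul, MonoidHom.mem_ker.1 ((hP _).1 p.1.2), one_mul, hs]
  refine ⟨fun p q hpq ↦ ?_, fun t ↦ ⟨⟨⟨t * (s (π t))⁻¹, ?_⟩, π t⟩, inv_mul_cancel_right _ _⟩⟩
  · have snd_eq : p.2 = q.2 := by rw [← proj p, ← proj q]; exact congrArg π hpq
    have fst_eq : (p.1 : G) = q.1 := by simpa only [snd_eq, mul_left_inj] using hpq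
    exact Prod.ext (Subtype.ext fst_eq) snd_eq
  · rw [hP, MonoidHom.mem_ker, map_mul, map_inv, hs, mul_inv_cancel]

theorem aut_to_aut_of_top_splits_general {Λ : Type*} [Ring Λ] {I : Ideal Λ} [I.IsTwoSided]
    (hI : IsNilpotent I) (σ : Λ ⧸ I →+* Λ) (hσ : ∀ a, Ideal.Quotient.mk I (σ a) = a)
    (Q : Type*) [AddCommGroup Q] [Module Λ Q] [Module.Projective Λ Q] :
    ∃ s : ((Q ⧸ (I • ⊤ : Submodule Λ Q)) ≃ₗ[Λ] (Q ⧸ (I • ⊤ : Submodule Λ Q))) →* (Q ≃ₗ[Λ] Q),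
      (∀ h x, (Submodule.Quotient.mk (s h x) : Q ⧸ (I • ⊤ : Submodule Λ Q)) =
        h (Submodule.Quotient.mk x)) ∧
      Function.Bijective
        (fun p : {u : Q ≃ₗ[Λ] Q // ∃ g : Q →ₗ[Λ] Q, LinearMap.range g ≤ I • (⊤ : Submodule Λ Q) ∧
              (u : Q →ₗ[Λ] Q) = LinearMap.id + g} ×
            ((Q ⧸ (I • ⊤ : Submodule Λ Q)) ≃ₗ[Λ] (Q ⧸ (I • ⊤ : Submodule Λ Q))) =>
          (p.1 : Q ≃ₗ[Λ] Q) * s p.2) := by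
  let ρ : Λ →+* Λ := σ.comp (Ideal.Quotient.mk I)
  have le_ker : I ≤ RingHom.ker ρ := fun a ha ↦ by
    simp [ρ, RingHom.mem_ker, Ideal.Quotient.eq_zero_iff_mem.2 ha]
  have sub_mem (a) : a - ρ a ∈ I := Ideal.Quotient.eq.1 (hσ _).symm
  obtain ⟨g, hg⟩ := exists_monoidHom_end_lift (M := Q) hI le_ker sub_mem
  let s := (LinearMap.GeneralLinearGroup.generalLinearEquiv Λ Q).toMonoidHom.comp
    ((Units.map g).comp (LinearMap.GeneralLinearGroup.generalLinearEquiv Λ _).symm.toMonoidHom)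
  have mk_s (h x) : Submodule.Quotient.mk (s h x) = h (Submodule.Quotient.mk x) := hg _ x
  have leftInverse : Function.LeftInverse (autQuotientSMulTop Q I) s := fun h ↦
    LinearEquiv.ext <| (Submodule.Quotient.mk_surjective _).forall.2 (mk_s h)
  exact ⟨s, mk_s, bijective_mul_section_of_leftInverse leftInverse
    fun _ ↦ (mem_ker_autQuotientSMulTop I).symm⟩

/-- Let `Λ` be a finite-dimensional algebra over an algebraically closed field
`K` and `Q` a finitely generated projective left `Λ`-module.  The canonical surjection
`Aut_Λ(Q) → Aut_Λ(Q/JQ)` splits via a group homomorphism `s`, each `s h` inducing `h` on `Q/JQ`;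
consequently `Aut_Λ(Q)` is the semidirect product of the normal subgroup
`{ id + g : g ∈ Hom_Λ(Q, JQ) }` with the image of `s` (a subgroup isomorphic to `Aut_Λ(Q/JQ)`),
which is expressed here by the bijectivity of `(u, h) ↦ u * s h`. -/
theorem aut_to_aut_of_top_splits
    (K : Type*) [Field K] [IsAlgClosed K]
    (Λ : Type*) [Ring Λ] [Algebra K Λ] [FiniteDimensional K Λ]
    (Q : Type*) [AddCommGroup Q] [Module Λ Q]
    [Module.Finite Λ Q] [Module.Projective Λ Q] :
    ∃ s : (((Q ⧸ ((⊥ : Ideal Λ).jacobson • (⊤ : Submodule Λ Q))) ≃ₗ[Λ]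
            (Q ⧸ ((⊥ : Ideal Λ).jacobson • (⊤ : Submodule Λ Q)))) →* (Q ≃ₗ[Λ] Q)),
      (∀ (h : (Q ⧸ ((⊥ : Ideal Λ).jacobson • (⊤ : Submodule Λ Q))) ≃ₗ[Λ]
            (Q ⧸ ((⊥ : Ideal Λ).jacobson • (⊤ : Submodule Λ Q)))) (x : Q),
        (Submodule.Quotient.mk ((s h) x) :
            Q ⧸ ((⊥ : Ideal Λ).jacobson • (⊤ : Submodule Λ Q)))
          = h (Submodule.Quotient.mk x)) ∧
      Function.Bijective
        (fun p : {u : Q ≃ₗ[Λ] Q // ∃ g : Q →ₗ[Λ] Q,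
              LinearMap.range g ≤ (⊥ : Ideal Λ).jacobson • (⊤ : Submodule Λ Q) ∧
              (u : Q →ₗ[Λ] Q) = LinearMap.id + g} ×
            ((Q ⧸ ((⊥ : Ideal Λ).jacobson • (⊤ : Submodule Λ Q))) ≃ₗ[Λ]
              (Q ⧸ ((⊥ : Ideal Λ).jacobson • (⊤ : Submodule Λ Q)))) =>
          (p.1 : Q ≃ₗ[Λ] Q) * s p.2) := by
  have : IsArtinianRing Λ := .of_finite K Λ
  obtain ⟨σ, hσ⟩ := exists_algHom_rightInverse_mkₐ_jacobson K Λ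
  rw [Ideal.jacobson_bot]
  exact aut_to_aut_of_top_splits_general IsSemiprimaryRing.isNilpotent (σ : _ →+* Λ)
    (AlgHom.congr_fun hσ) Q
end

section
/- Let Q be a finitely generated projective left Λ-module, C a Λ-submodule of Q, and M = Q/C. Let Stab = { g ∈ Hom_Λ(Q, JQ) : g(C) ⊆ C }, a K-subspace of Hom_Λ(Q, JQ). Then dim_K Hom_Λ(Q, JQ) − dim_K Stab = dim_K Hom_Λ(Q, JM) − dim_K Hom_Λ(M, JM), where all dimensions are finite. -/
/-- The radical submodule `J•X` of a `Λ`-module `X`, where `J` is the Jacobson radical of `Λ`. -/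
def radSMul (Λ : Type*) [Ring Λ] (X : Type*) [AddCommGroup X] [Module Λ X] :
    Submodule Λ X :=
  (⊥ : Ideal Λ).jacobson • (⊤ : Submodule Λ X)

/-- The stabilizer `{ g ∈ Hom_Λ(Q, JQ) : g(C) ⊆ C }`, a `K`-subspace of `Hom_Λ(Q, JQ)`. -/
def homStab (K : Type*) [Field K] (Λ : Type*) [Ring Λ] [Algebra K Λ]
    (Q : Type*) [AddCommGroup Q] [Module Λ Q] [Module K Q] [IsScalarTower K Λ Q]
    (C : Submodule Λ Q) :
    Submodule K (Q →ₗ[Λ] ↥(radSMul Λ Q)) where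
  carrier := {g | ∀ x ∈ C, ((g x : Q) ∈ C)}
  add_mem' {g h} hg hh x hx := by
    simpa using C.add_mem (hg x hx) (hh x hx)
  zero_mem' x hx := by simp
  smul_mem' k g hg x hx := by
    simpa using C.smul_of_tower_mem k (hg x hx)

/-!
Composition with `JQ → JM` is a map `Φ : Hom_Λ(Q, JQ) → Hom_Λ(Q, JM)`, surjective because `Q` is
projective and `JQ → JM` is onto; composition with `Q → M` embeds `Hom_Λ(M, JM)` in
`Hom_Λ(Q, JM)`. A map `g : Q → JQ` preserves `C` exactly when `Φ g` kills `C`, that is, when `Φ g`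
factors through `M`. So `Stab` is the preimage under `Φ` of `Hom_Λ(M, JM)`, and a preimage under a
surjection has the same codimension.
-/

open Function Module

section LinearMaps

theorem finrank_add_finrank_eq_finrank_add_finrank_comap {K V W : Type*} [DivisionRing K]
    [AddCommGroup V] [Module K V] [AddCommGroup W] [Module K W] [FiniteDimensional K V]
    {f : V →ₗ[K] W} (hf : Surjective f) (p : Submodule K W) :
    finrank K V + finrank K p = finrank K W + finrank K (p.comap f) := by
  have : FiniteDimensional K W := .of_surjective f hf
  have hker : LinearMap.ker (p.mkQ ∘ₗ f) = p.comap f := by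
    rw [LinearMap.ker_comp, Submodule.ker_mkQ]
  have hrange : LinearMap.range (p.mkQ ∘ₗ f) = ⊤ :=
    LinearMap.range_eq_top.2 (p.mkQ_surjective.comp hf)
  have hV : finrank K (W ⧸ p) + finrank K (p.comap f) = finrank K V := by
    rw [← hker, ← (p.mkQ ∘ₗ f).finrank_range_add_finrank_ker, hrange, finrank_top]
  have hW : finrank K (W ⧸ p) + finrank K p = finrank K W := p.finrank_quotient_add_finrank
  omega

variable {R X Y Z : Type*} [Ring R] [AddCommGroup X] [Module R X] [AddCommGroup Y] [Module R Y]
  [AddCommGroup Z] [Module R Z]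

theorem compRight_surjective_of_projective (S : Type*) [Semiring S] [Module S Y] [Module S Z]
    [SMulCommClass R S Y] [SMulCommClass R S Z] [LinearMap.CompatibleSMul Y Z S R]
    [Projective R X] {f : Y →ₗ[R] Z} (hf : Surjective f) :
    Surjective (LinearMap.compRight S f : (X →ₗ[R] Y) →ₗ[S] X →ₗ[R] Z) :=
  fun g ↦ projective_lifting_property f g hf

theorem mem_range_lcomp_mkQ_iff (S : Type*) [Semiring S] [Module S Y] [SMulCommClass R S Y]
    (C : Submodule R X) (g : X →ₗ[R] Y) :
    g ∈ LinearMap.range (LinearMap.lcomp S Y C.mkQ) ↔ C ≤ LinearMap.ker g := by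
  constructor
  · rintro ⟨f, rfl⟩ x hx
    simp [(Submodule.Quotient.mk_eq_zero C).2 hx]
  · exact fun hg ↦ ⟨C.liftQ g hg, C.liftQ_mkQ g hg⟩

theorem finite_linearMap_of_isNoetherian (S : Type*) [Ring S] [Module S Y] [SMulCommClass R S Y]
    [Module.Finite R X] [IsNoetherian S Y] : Module.Finite S (X →ₗ[R] Y) := by
  obtain ⟨s, hs⟩ := Module.Finite.fg_top (R := R) (M := X)
  let restrict : (X →ₗ[R] Y) →ₗ[S] s → Y :=
    LinearMap.funLeft S Y Subtype.val ∘ₗ LinearMap.ltoFun R X Y S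
  have hrestrict : Injective restrict := fun f g hfg ↦
    LinearMap.ext_on hs fun x hx ↦ congrFun hfg ⟨x, hx⟩
  exact .of_injective restrict hrestrict

theorem finite_linearMap_submodule (S : Type*) [CommRing S] [IsNoetherianRing S] [Algebra S R]
    [Module.Finite S R] [Module S Y] [IsScalarTower S R Y] [Module.Finite R X] [Module.Finite R Y]
    (N : Submodule R Y) : Module.Finite S (X →ₗ[R] N) := by
  have : IsNoetherianRing R := .of_finite S R
  have : Module.Finite S N := Module.Finite.trans R N
  exact finite_linearMap_of_isNoetherian S

theorem finite_linearMap_of_projective (S : Type*) [Semiring S] [Module S Y] [Module S Z]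
    [SMulCommClass R S Y] [SMulCommClass R S Z] [LinearMap.CompatibleSMul Y Z S R]
    [Projective R X] [Module.Finite S (X →ₗ[R] Y)] {f : Y →ₗ[R] Z} (hf : Surjective f) :
    Module.Finite S (X →ₗ[R] Z) :=
  .of_surjective _ (compRight_surjective_of_projective S hf)

theorem finite_linearMap_quotient (S : Type*) [Ring S] [IsNoetherianRing S] [Module S Y]
    [SMulCommClass R S Y] [Module.Finite S (X →ₗ[R] Y)] (C : Submodule R X) :
    Module.Finite S ((X ⧸ C) →ₗ[R] Y) :=
  .of_injective _ (LinearMap.lcomp_injective_of_surjective (S := S) _ C.mkQ_surjective)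

theorem finrank_linearMap_add_finrank_linearMap_quotient (K : Type*) [DivisionRing K] [Module K Y]
    [Module K Z] [SMulCommClass R K Y] [SMulCommClass R K Z] [LinearMap.CompatibleSMul Y Z K R]
    [Projective R X] [FiniteDimensional K (X →ₗ[R] Y)] {f : Y →ₗ[R] Z} (hf : Surjective f)
    (C : Submodule R X) :
    finrank K (X →ₗ[R] Y) + finrank K ((X ⧸ C) →ₗ[R] Z) = finrank K (X →ₗ[R] Z) +
      finrank K ((LinearMap.range (LinearMap.lcomp K Z C.mkQ)).comap
        (LinearMap.compRight K f)) := by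
  have hinj : Injective (LinearMap.lcomp K Z C.mkQ) :=
    LinearMap.lcomp_injective_of_surjective _ C.mkQ_surjective
  rw [← LinearMap.finrank_range_of_inj hinj]
  exact finrank_add_finrank_eq_finrank_add_finrank_comap
    (compRight_surjective_of_projective K hf) _

end LinearMaps

section RadSMul

variable {Λ X Y : Type*} [Ring Λ] [AddCommGroup X] [Module Λ X] [AddCommGroup Y] [Module Λ Y]

theorem map_radSMul_le (f : X →ₗ[Λ] Y) : (radSMul Λ X).map f ≤ radSMul Λ Y := by
  rw [radSMul, Submodule.map_smul'']
  exact smul_mono_right _ le_top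

theorem map_radSMul_of_surjective {f : X →ₗ[Λ] Y} (hf : Surjective f) :
    (radSMul Λ X).map f = radSMul Λ Y := by
  rw [radSMul, Submodule.map_smul'', Submodule.map_top, LinearMap.range_eq_top.2 hf, radSMul]

/-- The map `JX → JY` that a `Λ`-linear map `X → Y` induces on radical submodules. -/
def radSMulMap (f : X →ₗ[Λ] Y) : radSMul Λ X →ₗ[Λ] radSMul Λ Y :=
  f.restrict (Submodule.map_le_iff_le_comap.1 (map_radSMul_le f))

@[simp]
theorem coe_radSMulMap_apply (f : X →ₗ[Λ] Y) (x : radSMul Λ X) : (radSMulMap f x : Y) = f x :=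
  rfl

theorem radSMulMap_surjective {f : X →ₗ[Λ] Y} (hf : Surjective f) : Surjective (radSMulMap f) := by
  rintro ⟨y, hy⟩
  obtain ⟨x, hx, rfl⟩ := (map_radSMul_of_surjective hf).ge hy
  exact ⟨⟨x, hx⟩, rfl⟩

end RadSMul

theorem homStab_eq_comap_range_lcomp (K : Type*) [Field K] (Λ : Type*) [Ring Λ] [Algebra K Λ]
    (Q : Type*) [AddCommGroup Q] [Module Λ Q] [Module K Q] [IsScalarTower K Λ Q]
    (C : Submodule Λ Q) :
    homStab K Λ Q C = (LinearMap.range (LinearMap.lcomp K (radSMul Λ (Q ⧸ C)) C.mkQ)).comap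
      (LinearMap.compRight K (radSMulMap C.mkQ)) := by
  ext g
  rw [Submodule.mem_comap, mem_range_lcomp_mkQ_iff]
  change (∀ x ∈ C, (g x : Q) ∈ C) ↔ _
  refine forall₂_congr fun x _ ↦ ?_
  simp [Subtype.ext_iff]

theorem finrank_hom_sub_stab_eq_general
    (K : Type*) [Field K] (Λ : Type*) [Ring Λ] [Algebra K Λ]
    (Q : Type*) [AddCommGroup Q] [Module Λ Q] [Module K Q] [IsScalarTower K Λ Q]
    [FiniteDimensional K (Q →ₗ[Λ] radSMul Λ Q)] [Projective Λ Q] (C : Submodule Λ Q) :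
    FiniteDimensional K (homStab K Λ Q C) ∧
    FiniteDimensional K (Q →ₗ[Λ] radSMul Λ (Q ⧸ C)) ∧
    FiniteDimensional K ((Q ⧸ C) →ₗ[Λ] radSMul Λ (Q ⧸ C)) ∧
    finrank K (Q →ₗ[Λ] radSMul Λ Q) - finrank K (homStab K Λ Q C)
      = finrank K (Q →ₗ[Λ] radSMul Λ (Q ⧸ C))
        - finrank K ((Q ⧸ C) →ₗ[Λ] radSMul Λ (Q ⧸ C)) ∧
    finrank K (Q →ₗ[Λ] radSMul Λ Q) + finrank K ((Q ⧸ C) →ₗ[Λ] radSMul Λ (Q ⧸ C))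
      = finrank K (Q →ₗ[Λ] radSMul Λ (Q ⧸ C)) + finrank K (homStab K Λ Q C) := by
  have hp : Surjective (radSMulMap C.mkQ) := radSMulMap_surjective C.mkQ_surjective
  have hQM := finite_linearMap_of_projective K (X := Q) hp
  have hMM := finite_linearMap_quotient K (Y := radSMul Λ (Q ⧸ C)) C
  have hsum := finrank_linearMap_add_finrank_linearMap_quotient K hp C
  rw [← homStab_eq_comap_range_lcomp] at hsum
  exact ⟨inferInstance, hQM, hMM, by omega, hsum⟩

/-- Let `Λ` be a finite-dimensional algebra over a field `K`, `Q` a finitely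
generated projective left `Λ`-module, `C ⊆ Q` a submodule, and `M = Q/C`.  With
`Stab = { g ∈ Hom_Λ(Q, JQ) : g(C) ⊆ C }`, all the `K`-spaces `Hom_Λ(Q, JQ)`, `Stab`,
`Hom_Λ(Q, JM)` and `Hom_Λ(M, JM)` are finite dimensional, and
`dim Hom_Λ(Q, JQ) − dim Stab = dim Hom_Λ(Q, JM) − dim Hom_Λ(M, JM)`. -/
theorem finrank_hom_sub_stab_eq
    (K : Type*) [Field K] (Λ : Type*) [Ring Λ] [Algebra K Λ] [FiniteDimensional K Λ]
    (Q : Type*) [AddCommGroup Q] [Module Λ Q] [Module K Q] [IsScalarTower K Λ Q]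
    [Module.Finite Λ Q] [Module.Projective Λ Q]
    (C : Submodule Λ Q) :
    FiniteDimensional K (Q →ₗ[Λ] ↥(radSMul Λ Q)) ∧
    FiniteDimensional K ↥(homStab K Λ Q C) ∧
    FiniteDimensional K (Q →ₗ[Λ] ↥(radSMul Λ (Q ⧸ C))) ∧
    FiniteDimensional K ((Q ⧸ C) →ₗ[Λ] ↥(radSMul Λ (Q ⧸ C))) ∧
    Module.finrank K (Q →ₗ[Λ] ↥(radSMul Λ Q)) - Module.finrank K ↥(homStab K Λ Q C)
      = Module.finrank K (Q →ₗ[Λ] ↥(radSMul Λ (Q ⧸ C)))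
        - Module.finrank K ((Q ⧸ C) →ₗ[Λ] ↥(radSMul Λ (Q ⧸ C))) ∧
    Module.finrank K (Q →ₗ[Λ] ↥(radSMul Λ Q))
        + Module.finrank K ((Q ⧸ C) →ₗ[Λ] ↥(radSMul Λ (Q ⧸ C)))
      = Module.finrank K (Q →ₗ[Λ] ↥(radSMul Λ (Q ⧸ C)))
        + Module.finrank K ↥(homStab K Λ Q C) := by
  have := finite_linearMap_submodule K (X := Q) (radSMul Λ Q)
  exact ⟨this, finrank_hom_sub_stab_eq_general K Λ Q C⟩
end

section
/- Let Q be a finitely generated left Λ-module, g : Q → Q a Λ-linear endomorphism whose image is contained in JQ (so that id_Q + g is an automorphism of Q), and C a Λ-submodule of Q. Then (id_Q + g)(C) = C if and only if g(C) ⊆ C. In other words, the stabilizer of C in the group { id_Q + g : g ∈ Hom_Λ(Q, JQ) } consists exactly of the automorphisms id_Q + g with g ∈ Hom_Λ(Q, JQ) satisfying g(C) ⊆ C. -/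
/-!
If `J` is nilpotent, every endomorphism `g` of `Q` with image in `JQ` is nilpotent, since
`g ^ k` maps `Q` into `J ^ k • Q`. If moreover `g` preserves `C`, its restriction to `C` is again
nilpotent, so `1 + g` restricts to a unit of `End C` and therefore maps `C` onto `C`.
-/

section Nilpotent

variable {R M : Type*} [Semiring R] [AddCommMonoid M] [Module R M] {I : Ideal R}
  {g : Module.End R M}

lemma range_pow_le_pow_smul_top (hg : LinearMap.range g ≤ I • (⊤ : Submodule R M)) (k : ℕ) :
    LinearMap.range (g ^ k) ≤ I ^ k • (⊤ : Submodule R M) := by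
  induction k with
  | zero => simp [Submodule.pow_zero]
  | succ k ih =>
    calc LinearMap.range (g ^ (k + 1)) = (LinearMap.range (g ^ k)).map g := by
          rw [pow_succ', Module.End.mul_eq_comp, LinearMap.range_comp]
      _ ≤ (I ^ k • (⊤ : Submodule R M)).map g := Submodule.map_mono ih
      _ = I ^ k • LinearMap.range g := by rw [Submodule.map_smul'', Submodule.map_top]
      _ ≤ I ^ k • I • (⊤ : Submodule R M) := Submodule.smul_mono le_rfl hg
      _ = I ^ (k + 1) • (⊤ : Submodule R M) := by rw [Submodule.pow_succ, Submodule.mul_smul]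

lemma isNilpotent_of_range_le_smul_top (hI : IsNilpotent I)
    (hg : LinearMap.range g ≤ I • (⊤ : Submodule R M)) : IsNilpotent g := by
  obtain ⟨n, hn⟩ := hI
  refine ⟨n, LinearMap.range_eq_bot.mp (le_bot_iff.mp ?_)⟩
  simpa [hn] using range_pow_le_pow_smul_top hg n

end Nilpotent

section Stabilizer

variable {R M : Type*} [Ring R] [AddCommGroup M] [Module R M] {g : Module.End R M}
  {C : Submodule R M}

lemma map_id_add_le_iff : C.map (LinearMap.id + g) ≤ C ↔ ∀ x ∈ C, g x ∈ C := by
  rw [Submodule.map_le_iff_le_comap]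
  exact forall₂_congr fun _ hx ↦ C.add_mem_iff_right hx

lemma le_map_id_add_of_isNilpotent (hg : IsNilpotent g) (hC : ∀ x ∈ C, g x ∈ C) :
    C ≤ C.map (LinearMap.id + g) := by
  have h_unit : IsUnit (1 + g.restrict hC) :=
    (Module.End.isNilpotent.restrict hC hg).isUnit_one_add
  intro x hx
  obtain ⟨y, hy⟩ := ((Module.End.isUnit_iff _).mp h_unit).surjective ⟨x, hx⟩
  exact ⟨y, y.property, congrArg Subtype.val hy⟩

theorem map_one_add_eq_self_iff_map_le_general (hg : IsNilpotent g) :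
    C.map (LinearMap.id + g) = C ↔ ∀ x ∈ C, g x ∈ C :=
  ⟨fun h ↦ map_id_add_le_iff.mp h.le,
    fun h ↦ (map_id_add_le_iff.mpr h).antisymm (le_map_id_add_of_isNilpotent hg h)⟩

end Stabilizer

/-- Let `Λ` be a finite-dimensional algebra over a field `K`, `Q` a finitely
generated left `Λ`-module, `g : Q → Q` a `Λ`-linear endomorphism whose image is contained in
`JQ` (so that `id + g` is an automorphism of `Q`), and `C` a `Λ`-submodule of `Q`.  Then
`(id + g)(C) = C` if and only if `g(C) ⊆ C`. -/
theorem map_one_add_eq_self_iff_map_le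
    (K : Type*) [Field K] (Λ : Type*) [Ring Λ] [Algebra K Λ] [FiniteDimensional K Λ]
    (Q : Type*) [AddCommGroup Q] [Module Λ Q] [Module.Finite Λ Q]
    (g : Q →ₗ[Λ] Q)
    (hg : LinearMap.range g ≤ (⊥ : Ideal Λ).jacobson • (⊤ : Submodule Λ Q))
    (C : Submodule Λ Q) :
    Submodule.map (LinearMap.id + g) C = C ↔ ∀ x ∈ C, g x ∈ C := by
  have : IsArtinianRing Λ := .of_finite K Λ
  exact map_one_add_eq_self_iff_map_le_general
    (isNilpotent_of_range_le_smul_top IsArtinianRing.isNilpotent_jacobson_bot hg)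
end

section
/- Let Q be a finitely generated projective left Λ-module, C a Λ-submodule of Q, and M = Q/C. Every g ∈ Hom_Λ(Q, JQ) with g(C) ⊆ C induces a Λ-linear map ḡ : M → JM, x + C ↦ g(x) + C (where JM = (JQ + C)/C). The resulting K-linear map { g ∈ Hom_Λ(Q, JQ) : g(C) ⊆ C } → Hom_Λ(M, JM), g ↦ ḡ, is surjective, and its kernel is exactly { g ∈ Hom_Λ(Q, JQ) : g(Q) ⊆ C ∩ JQ }. -/
section LiftQComp

variable {K Λ Q N P : Type*} [Semiring K] [Ring Λ]
  [AddCommGroup Q] [Module Λ Q]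
  [AddCommMonoid N] [Module Λ N] [Module K N] [SMulCommClass Λ K N]
  [AddCommGroup P] [Module Λ P] [Module K P] [SMulCommClass Λ K P]
  [LinearMap.CompatibleSMul N P K Λ]
  {C : Submodule Λ Q} {p : N →ₗ[Λ] P} {S : Submodule K (Q →ₗ[Λ] N)}

/-- The `K`-linear map `g ↦ (x + C ↦ p (g x))` on a space `S` of maps `g : Q → N` whose composite
with `p : N → P` vanishes on `C`. -/
def liftQComp (C : Submodule Λ Q) (p : N →ₗ[Λ] P) (S : Submodule K (Q →ₗ[Λ] N))
    (hS : ∀ g ∈ S, C ≤ LinearMap.ker (p ∘ₗ g)) : S →ₗ[K] (Q ⧸ C →ₗ[Λ] P) where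
  toFun g := C.liftQ (p ∘ₗ g.1) (hS g g.2)
  map_add' g h := by
    ext x
    simp
  map_smul' k g := by
    ext x
    simp

variable {hS : ∀ g ∈ S, C ≤ LinearMap.ker (p ∘ₗ g)}

theorem liftQComp_surjective [Module.Projective Λ Q] (hp : Function.Surjective p)
    (hS' : ∀ g, C ≤ LinearMap.ker (p ∘ₗ g) → g ∈ S) :
    Function.Surjective (liftQComp C p S hS) := by
  intro f
  obtain ⟨g, hg⟩ := Module.projective_lifting_property p (f ∘ₗ C.mkQ) hp
  have hgC : C ≤ LinearMap.ker (p ∘ₗ g) := by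
    rw [hg]
    simpa only [Submodule.ker_mkQ] using LinearMap.ker_le_ker_comp C.mkQ f
  exact ⟨⟨g, hS' g hgC⟩, Submodule.linearMap_qext C hg⟩

theorem liftQComp_eq_zero_iff {g : S} :
    liftQComp C p S hS g = 0 ↔ ∀ x, g.1 x ∈ LinearMap.ker p :=
  ⟨fun h x => LinearMap.congr_fun h (C.mkQ x),
    fun h => Submodule.linearMap_qext C (LinearMap.ext h)⟩

end LiftQComp

namespace radSMul

variable {Λ X Y : Type*} [Ring Λ] [AddCommGroup X] [Module Λ X] [AddCommGroup Y] [Module Λ Y]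

theorem submodule_map_eq_of_surjective {f : X →ₗ[Λ] Y} (hf : Function.Surjective f) :
    (radSMul Λ X).map f = radSMul Λ Y := by
  rw [radSMul, radSMul, Submodule.map_smul'', Submodule.map_top, LinearMap.range_eq_top.2 hf]

theorem le_comap (f : X →ₗ[Λ] Y) : radSMul Λ X ≤ (radSMul Λ Y).comap f :=
  Submodule.smul_top_le_comap_smul_top _ f

/-- The action of the functor `X ↦ J•X` on morphisms: the restriction `J•X → J•Y` of
`f : X → Y`. -/
def map (f : X →ₗ[Λ] Y) : radSMul Λ X →ₗ[Λ] radSMul Λ Y :=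
  f.restrict (le_comap f)

theorem map_surjective {f : X →ₗ[Λ] Y} (hf : Function.Surjective f) :
    Function.Surjective (map f) := by
  rintro ⟨y, hy⟩
  obtain ⟨x, hx, rfl⟩ := (submodule_map_eq_of_surjective hf).ge hy
  exact ⟨⟨x, hx⟩, rfl⟩

theorem mem_ker_map {f : X →ₗ[Λ] Y} {x : radSMul Λ X} :
    x ∈ LinearMap.ker (map f) ↔ (x : X) ∈ LinearMap.ker f :=
  Subtype.ext_iff

end radSMul

namespace homStab

variable {K Λ Q : Type*} [Field K] [Ring Λ] [Algebra K Λ]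
  [AddCommGroup Q] [Module Λ Q] [Module K Q] [IsScalarTower K Λ Q] {C : Submodule Λ Q}

theorem mem_iff_le_ker {g : Q →ₗ[Λ] radSMul Λ Q} :
    g ∈ homStab K Λ Q C ↔ C ≤ LinearMap.ker (radSMul.map C.mkQ ∘ₗ g) := by
  simp only [SetLike.le_def, LinearMap.ker_comp, Submodule.mem_comap, radSMul.mem_ker_map,
    Submodule.ker_mkQ]
  rfl

variable (K C) in
/-- The map `g ↦ ḡ` from the stabilizer of `C` to `Hom_Λ(Q/C, J(Q/C))`, where
`ḡ (x + C) = g x + C`. -/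
def toQuotientHom : homStab K Λ Q C →ₗ[K] (Q ⧸ C →ₗ[Λ] radSMul Λ (Q ⧸ C)) :=
  liftQComp C (radSMul.map C.mkQ) (homStab K Λ Q C) fun _ => mem_iff_le_ker.1

theorem coe_toQuotientHom_mk (g : homStab K Λ Q C) (x : Q) :
    (toQuotientHom K C g (Submodule.Quotient.mk x) : Q ⧸ C) =
      Submodule.Quotient.mk (g.1 x : Q) :=
  rfl

theorem toQuotientHom_surjective [Module.Projective Λ Q] :
    Function.Surjective (toQuotientHom K C) :=
  liftQComp_surjective (radSMul.map_surjective C.mkQ_surjective) fun _ => mem_iff_le_ker.2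

theorem toQuotientHom_eq_zero_iff {g : homStab K Λ Q C} :
    toQuotientHom K C g = 0 ↔ ∀ x, (g.1 x : Q) ∈ C ⊓ radSMul Λ Q := by
  simp only [toQuotientHom, liftQComp_eq_zero_iff, radSMul.mem_ker_map, Submodule.ker_mkQ,
    Submodule.mem_inf, SetLike.coe_mem, and_true]

end homStab

theorem stab_to_hom_quotient_surjective_with_kernel_general
    (K : Type*) [Field K] (Λ : Type*) [Ring Λ] [Algebra K Λ]
    (Q : Type*) [AddCommGroup Q] [Module Λ Q] [Module K Q] [IsScalarTower K Λ Q]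
    [Module.Projective Λ Q]
    (C : Submodule Λ Q) :
    ∃ Φ : ↥(homStab K Λ Q C) →ₗ[K] ((Q ⧸ C) →ₗ[Λ] ↥(radSMul Λ (Q ⧸ C))),
      (∀ (g : ↥(homStab K Λ Q C)) (x : Q),
        ((Φ g (Submodule.Quotient.mk x) : ↥(radSMul Λ (Q ⧸ C))) : Q ⧸ C)
          = Submodule.Quotient.mk (((g : Q →ₗ[Λ] ↥(radSMul Λ Q)) x : Q))) ∧
      Function.Surjective Φ ∧
      ∀ g : ↥(homStab K Λ Q C),
        Φ g = 0 ↔ ∀ x : Q, ((g : Q →ₗ[Λ] ↥(radSMul Λ Q)) x : Q) ∈ C ⊓ radSMul Λ Q :=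
  ⟨homStab.toQuotientHom K C, homStab.coe_toQuotientHom_mk, homStab.toQuotientHom_surjective,
    fun _ => homStab.toQuotientHom_eq_zero_iff⟩

/-- Let `Λ` be a finite-dimensional algebra over a field `K`, `Q` a finitely
generated projective left `Λ`-module, `C ⊆ Q` a submodule and `M = Q/C`.  Every
`g ∈ Hom_Λ(Q, JQ)` with `g(C) ⊆ C` induces `ḡ : M → JM`, `x + C ↦ g(x) + C`; the resulting
`K`-linear map `Stab → Hom_Λ(M, JM)`, `g ↦ ḡ`, is surjective with kernel exactly
`{ g : g(Q) ⊆ C ∩ JQ }`. -/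
theorem stab_to_hom_quotient_surjective_with_kernel
    (K : Type*) [Field K] (Λ : Type*) [Ring Λ] [Algebra K Λ] [FiniteDimensional K Λ]
    (Q : Type*) [AddCommGroup Q] [Module Λ Q] [Module K Q] [IsScalarTower K Λ Q]
    [Module.Finite Λ Q] [Module.Projective Λ Q]
    (C : Submodule Λ Q) :
    ∃ Φ : ↥(homStab K Λ Q C) →ₗ[K] ((Q ⧸ C) →ₗ[Λ] ↥(radSMul Λ (Q ⧸ C))),
      (∀ (g : ↥(homStab K Λ Q C)) (x : Q),
        ((Φ g (Submodule.Quotient.mk x) : ↥(radSMul Λ (Q ⧸ C))) : Q ⧸ C)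
          = Submodule.Quotient.mk (((g : Q →ₗ[Λ] ↥(radSMul Λ Q)) x : Q))) ∧
      Function.Surjective Φ ∧
      ∀ g : ↥(homStab K Λ Q C),
        Φ g = 0 ↔ ∀ x : Q, ((g : Q →ₗ[Λ] ↥(radSMul Λ Q)) x : Q) ∈ C ⊓ radSMul Λ Q :=
  stab_to_hom_quotient_surjective_with_kernel_general K Λ Q C
end
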